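/- arXiv:1409.3898 — 8 statements merged into one kernel-verified Lean document; each statement's English description precedes it below -/
import Mathlib

section
/- Let A be a finite set with a distinguished element 1 and an involution a ↦ ā, and let S be a unitary A×A complex matrix satisfying S_{ā,b} = conj(S_{a,b}) for all a,b ∈ A and S_{1,x} ≠ 0 for all x ∈ A. Define fusion multiplicities N^c_{ab} = Σ_{x∈A} S_{a,x} S_{b,x} conj(S_{c,x}) / S_{1,x} (the Verlinde formula), let V be the complex vector space with basis {f_a}_{a∈A} equipped with the bilinear product f_a · f_b = Σ_{c∈A} N^c_{ab} f_c, and set p_a = S_{1,a} Σ_{b∈A} conj(S_{b,a}) f_b. Then p_a · p_b = δ_{a,b} p_a for all a,b ∈ A, and Σ_{a∈A} p_a = f_1. -/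
open scoped BigOperators

/-!
Normalise the rows of `S` by the row of the trivial label: `χ a x = S a x / S one x`. The inverse
of this matrix is `P x c = S one x * conj (S c x)`, and the Verlinde formula reads
`N a b c = ∑ x, χ a x * χ b x * P x c`. So `u ↦ u ᵥ* χ` carries the Verlinde product to the
pointwise product of functions, with inverse `φ ↦ φ ᵥ* P`. The vectors `p x` are the rows of `P`,
the images of the indicator functions, and `f one` is the image of the constant function `1`.
-/

section DiagonalizedProduct

open scoped Matrix

variable {A X R : Type*} [Fintype X]

theorem sum_rows_eq_single [NonAssocSemiring R] [DecidableEq A] {χ : Matrix A X R}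
    {P : Matrix X A R} (hχP : χ * P = 1) {one : A} (hone : χ one = 1) :
    ∑ x, P x = Pi.single one 1 := by
  ext c
  calc (∑ x, P x) c = ∑ x, P x c := Finset.sum_apply c _ _
    _ = (χ * P) one c := by simp [hone, Matrix.mul_apply]
    _ = Pi.single (M := fun _ => R) one 1 c := by rw [hχP, Matrix.one_eq_pi_single]

variable [Fintype A]

/-- The product on `A → R` obtained from the pointwise product on `X → R` by passing through the
matrix `χ`, whose columns are to be the characters of the product, and back through `P`, which is
meant to be inverse to `χ`. -/
def diagonalizedMul [NonUnitalNonAssocSemiring R] (χ : Matrix A X R) (P : Matrix X A R)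
    (u v : A → R) : A → R :=
  ((u ᵥ* χ) * (v ᵥ* χ)) ᵥ* P

theorem diagonalizedMul_row_row [NonAssocSemiring R] [DecidableEq X] {χ : Matrix A X R}
    {P : Matrix X A R} (hPχ : P * χ = 1) (x y : X) :
    diagonalizedMul χ P (P x) (P y) = if x = y then P x else 0 := by
  have row_vecMul (z : X) : P z ᵥ* χ = Pi.single z 1 := by
    ext w
    rw [← Matrix.mul_apply_eq_vecMul, hPχ, Matrix.one_eq_pi_single]
  rw [diagonalizedMul, row_vecMul, row_vecMul]
  split_ifs with hxy
  · rw [hxy, ← Pi.single_mul, one_mul, Matrix.single_one_vecMul]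
    rfl
  · rw [← Pi.single_mul_left, Pi.single_eq_of_ne hxy, mul_zero, Pi.single_zero, Matrix.zero_vecMul]

theorem diagonalizedMul_apply [NonUnitalCommSemiring R] (χ : Matrix A X R) (P : Matrix X A R)
    (u v : A → R) (c : A) :
    diagonalizedMul χ P u v c = ∑ a, ∑ b, u a * v b * ∑ x, χ a x * χ b x * P x c := by
  calc diagonalizedMul χ P u v c
      = ∑ x, ∑ a, ∑ b, u a * χ a x * (v b * χ b x) * P x c := by
        simp only [diagonalizedMul, Matrix.vecMul, dotProduct, Pi.mul_apply, Finset.sum_mul_sum]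
        simp only [Finset.sum_mul]
    _ = ∑ a, ∑ b, ∑ x, u a * χ a x * (v b * χ b x) * P x c := by
        rw [Finset.sum_comm]
        exact Finset.sum_congr rfl fun a _ => Finset.sum_comm
    _ = ∑ a, ∑ b, u a * v b * ∑ x, χ a x * χ b x * P x c := by
        simp only [Finset.mul_sum, mul_mul_mul_comm (u _), mul_assoc]

end DiagonalizedProduct

section Verlinde

variable {A K : Type*} [Field K]

/-- The characters `a ↦ S a x / S one x` of the Verlinde algebra, as the columns of a matrix. -/
def verlindeCharacter (S : Matrix A A K) (one : A) : Matrix A A K :=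
  Matrix.of fun a x => S a x / S one x

/-- The candidate primitive idempotents of the Verlinde algebra, as the rows of a matrix. The
matrix `T` stands for the inverse of `S`, that is `Sᴴ` for unitary `S`. -/
def verlindeIdempotent (S T : Matrix A A K) (one : A) : Matrix A A K :=
  Matrix.of fun x c => S one x * T x c

theorem verlindeCharacter_one {S : Matrix A A K} {one : A} (hone : ∀ x, S one x ≠ 0) :
    verlindeCharacter S one one = 1 :=
  funext fun x => div_self (hone x)

theorem verlindeFormula_summand_eq {S : Matrix A A K} (T : Matrix A A K) {one : A}
    (hone : ∀ x, S one x ≠ 0) (a b c x : A) :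
    S a x * S b x * T x c / S one x =
      verlindeCharacter S one a x * verlindeCharacter S one b x *
        verlindeIdempotent S T one x c := by
  have := hone x
  simp only [verlindeCharacter, verlindeIdempotent, Matrix.of_apply]
  field_simp

variable [Fintype A] [DecidableEq A]

theorem verlindeCharacter_mul_verlindeIdempotent {S T : Matrix A A K} (hST : S * T = 1) {one : A}
    (hone : ∀ x, S one x ≠ 0) :
    verlindeCharacter S one * verlindeIdempotent S T one = 1 := by
  rw [← hST]
  ext a c
  simp only [Matrix.mul_apply, verlindeCharacter, verlindeIdempotent, Matrix.of_apply]
  refine Finset.sum_congr rfl fun x _ => ?_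
  rw [← mul_assoc, div_mul_cancel₀ _ (hone x)]

theorem verlinde_primitive_idempotents_general (one : A) (S T : Matrix A A K) (hST : S * T = 1)
    (hone : ∀ x, S one x ≠ 0)
    (N : A → A → A → K)
    (hN : ∀ a b c, N a b c = ∑ x, S a x * S b x * T x c / S one x)
    (mul : (A → K) → (A → K) → (A → K))
    (hmul : ∀ u v c, mul u v c = ∑ a, ∑ b, u a * v b * N a b c)
    (p : A → (A → K))
    (hp : ∀ a b, p a b = S one a * T a b) :
    (∀ a b, mul (p a) (p b) = if a = b then p a else 0) ∧
      (∑ a, p a) = Pi.single one 1 := by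
  have p_eq_row : p = verlindeIdempotent S T one := funext₂ hp
  have mul_eq : mul = diagonalizedMul (verlindeCharacter S one) (verlindeIdempotent S T one) := by
    ext u v c
    simp only [hmul, hN, diagonalizedMul_apply, verlindeFormula_summand_eq T hone]
  have χ_mul_P := verlindeCharacter_mul_verlindeIdempotent hST hone
  rw [p_eq_row, mul_eq]
  exact ⟨diagonalizedMul_row_row (mul_eq_one_comm.mp χ_mul_P),
    sum_rows_eq_single χ_mul_P (verlindeCharacter_one hone)⟩

end Verlinde

/-- **Verlinde formula gives primitive idempotents.**
Let `A` be a finite set with a distinguished element `one` and an involution `inv`, and let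
`S` be a unitary `A × A` complex matrix satisfying `S (inv a) b = conj (S a b)` and
`S one x ≠ 0`.  Define the fusion multiplicities by the Verlinde formula, let the Verlinde
algebra be `A → ℂ` with basis `f a = Pi.single a 1` and product determined bilinearly by
the structure constants `N`, and set `p a = S one a • (fun b => conj (S b a))`.
Then the `p a` are orthogonal idempotents summing to `f one`. -/
theorem verlinde_primitive_idempotents
    {A : Type*} [Fintype A] [DecidableEq A] (one : A) (inv : A → A)
    (hinv : ∀ a, inv (inv a) = a)
    (S : Matrix A A ℂ) (hS : S ∈ Matrix.unitaryGroup A ℂ)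
    (hconj : ∀ a b, S (inv a) b = (starRingEnd ℂ) (S a b))
    (hone : ∀ x, S one x ≠ 0)
    (N : A → A → A → ℂ)
    (hN : ∀ a b c, N a b c = ∑ x, S a x * S b x * (starRingEnd ℂ) (S c x) / S one x)
    (mul : (A → ℂ) → (A → ℂ) → (A → ℂ))
    (hmul : ∀ u v c, mul u v c = ∑ a, ∑ b, u a * v b * N a b c)
    (p : A → (A → ℂ))
    (hp : ∀ a b, p a b = S one a * (starRingEnd ℂ) (S b a)) :
    (∀ a b, mul (p a) (p b) = if a = b then p a else 0) ∧
      (∑ a, p a) = Pi.single one 1 :=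
  verlinde_primitive_idempotents_general one S (star S) (Matrix.mem_unitaryGroup_iff.mp hS) hone
    N hN mul hmul p hp
end

section
/- Let V be a unitary n×n complex matrix and D a diagonal unitary n×n matrix such that V D Vᴴ is diagonal, where Vᴴ is the conjugate transpose. Then for every row index ℓ and all column indices k₁, k₂ with V_{ℓ,k₁} ≠ 0 and V_{ℓ,k₂} ≠ 0, one has D_{k₁,k₁} = D_{k₂,k₂}; moreover D_{k,k} = (V D Vᴴ)_{ℓ,ℓ} whenever V_{ℓ,k} ≠ 0. -/
open scoped Matrix

section IsDiag

variable {m n R : Type*} [Fintype n]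

theorem mul_apply_of_isDiag_right [NonUnitalNonAssocSemiring R] {D : Matrix n n R}
    (hD : D.IsDiag) (A : Matrix m n R) (i : m) (j : n) : (A * D) i j = A i j * D j j := by
  classical
  conv_lhs => rw [← hD.diagonal_diag, Matrix.mul_diagonal, Matrix.diag_apply]

theorem mul_apply_of_isDiag_left [NonUnitalNonAssocSemiring R] {D : Matrix n n R}
    (hD : D.IsDiag) (A : Matrix n m R) (i : n) (j : m) : (D * A) i j = D i i * A i j := by
  classical
  conv_lhs => rw [← hD.diagonal_diag, Matrix.diagonal_mul, Matrix.diag_apply]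

theorem isDiag_apply_eq_of_mul_eq_mul_of_ne_zero [Fintype m] [NonUnitalNonAssocCommSemiring R]
    [IsCancelMulZero R] {V : Matrix m n R} {D : Matrix n n R} {E : Matrix m m R}
    (hD : D.IsDiag) (hE : E.IsDiag) (hVD : V * D = E * V) {ℓ : m} {k : n} (hk : V ℓ k ≠ 0) :
    D k k = E ℓ ℓ := by
  refine mul_left_cancel₀ hk ?_
  calc V ℓ k * D k k = (V * D) ℓ k := (mul_apply_of_isDiag_right hD V ℓ k).symm
    _ = (E * V) ℓ k := by rw [hVD]
    _ = E ℓ ℓ * V ℓ k := mul_apply_of_isDiag_left hE V ℓ k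
    _ = V ℓ k * E ℓ ℓ := mul_comm _ _

end IsDiag

theorem diagonal_conjugation_constant_phases_general
    {m n R : Type*} [Fintype m] [Fintype n] [DecidableEq n] [CommSemiring R] [IsCancelMulZero R]
    {V : Matrix m n R} {W : Matrix n m R} (hWV : W * V = 1) {D : Matrix n n R}
    (hDdiag : D.IsDiag) (hconj : (V * D * W).IsDiag) :
    (∀ ℓ k₁ k₂, V ℓ k₁ ≠ 0 → V ℓ k₂ ≠ 0 → D k₁ k₁ = D k₂ k₂) ∧
      (∀ ℓ k, V ℓ k ≠ 0 → D k k = (V * D * W) ℓ ℓ) := by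
  have hVD : V * D = V * D * W * V := by rw [Matrix.mul_assoc (V * D), hWV, Matrix.mul_one]
  have hphase (ℓ : m) (k : n) (hk : V ℓ k ≠ 0) : D k k = (V * D * W) ℓ ℓ :=
    isDiag_apply_eq_of_mul_eq_mul_of_ne_zero hDdiag hconj hVD hk
  exact ⟨fun ℓ k₁ k₂ h₁ h₂ ↦ (hphase ℓ k₁ h₁).trans (hphase ℓ k₂ h₂).symm, hphase⟩

/-- **Diagonal phases are constant on the support of each row.**
If `V` is unitary, `D` is a diagonal unitary matrix, and `V * D * Vᴴ` is again diagonal,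
then for every row `ℓ` the diagonal entries `D k k` agree for all columns `k` where
`V ℓ k ≠ 0`, and they equal the corresponding diagonal entry of `V * D * Vᴴ`. -/
theorem diagonal_conjugation_constant_phases
    {n : ℕ}
    (V : Matrix (Fin n) (Fin n) ℂ) (hV : V ∈ Matrix.unitaryGroup (Fin n) ℂ)
    (D : Matrix (Fin n) (Fin n) ℂ) (hD : D ∈ Matrix.unitaryGroup (Fin n) ℂ)
    (hDdiag : D.IsDiag)
    (hconj : (V * D * Vᴴ).IsDiag) :
    (∀ ℓ k₁ k₂ : Fin n, V ℓ k₁ ≠ 0 → V ℓ k₂ ≠ 0 → D k₁ k₁ = D k₂ k₂) ∧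
      (∀ ℓ k : Fin n, V ℓ k ≠ 0 → D k k = (V * D * Vᴴ) ℓ ℓ) :=
  diagonal_conjugation_constant_phases_general (Matrix.mem_unitaryGroup_iff'.mp hV) hDdiag hconj
end

section
/- Let n ≥ 2 and let U be a unitary n×n complex matrix that is not a scalar multiple of the identity (equivalently, U has at least two distinct eigenvalues). Then there exists a unitary n×n matrix V such that V U Vᴴ is not monomial, where Vᴴ is the conjugate transpose. -/
open scoped Matrix

/-- A square matrix is monomial if every row and every column contains exactly one
nonzero entry. -/
def Matrix.IsMonomial {n : Type*} [Fintype n] (M : Matrix n n ℂ) : Prop :=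
  (∀ i, ∃! j, M i j ≠ 0) ∧ (∀ j, ∃! i, M i j ≠ 0)

/-!
View the matrix as an operator `T` and look for a unit vector `u` that is neither an eigenvector
of `T` nor orthogonal to `T u`. In any orthonormal basis containing `u`, the column of `T` indexed
by `u` then has two nonzero entries: the diagonal one, and another because `T u` is not a multiple
of `u`.

To find `u`, start from a non-eigenvector `w` and suppose `⟪w, T w⟫ = 0`. Pick `x` with
`⟪x, T x⟫ ≠ 0`. For small `t ≠ 0` both `w + t x` and `w - t x` are non-eigenvectors, and by the
parallelogram law the quadratic form of `T` does not vanish at both of them.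
-/

open Filter LinearMap Module Topology
open scoped InnerProductSpace

section InnerProductSpace

variable {𝕜 E ι : Type*} [RCLike 𝕜] [NormedAddCommGroup E] [InnerProductSpace 𝕜 E]

theorem inner_map_parallelogram_law (T : E →ₗ[𝕜] E) (x y : E) :
    ⟪x + y, T (x + y)⟫_𝕜 + ⟪x - y, T (x - y)⟫_𝕜 = 2 * (⟪x, T x⟫_𝕜 + ⟪y, T y⟫_𝕜) := by
  simp only [map_add, map_sub, inner_add_left, inner_add_right, inner_sub_left, inner_sub_right]
  ring

theorem exists_orthonormalBasis_apply_eq_inv_norm_smul [FiniteDimensional 𝕜 E] [Fintype ι]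
    (hcard : finrank 𝕜 E = Fintype.card ι) (i : ι) {u : E} (hu : u ≠ 0) :
    ∃ b : OrthonormalBasis ι 𝕜 E, b i = (‖u‖⁻¹ : 𝕜) • u := by
  have hunit : Orthonormal 𝕜 (({i} : Set ι).domRestrict fun _ ↦ (‖u‖⁻¹ : 𝕜) • u) :=
    ⟨fun _ ↦ norm_smul_inv_norm hu, fun j k hjk ↦ absurd (Subsingleton.elim j k) hjk⟩
  obtain ⟨b, hb⟩ := hunit.exists_orthonormalBasis_extension_of_card_eq hcard
  exact ⟨b, hb i rfl⟩

theorem exists_ne_inner_ne_zero_of_linearIndependent_pair [Fintype ι]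
    (b : OrthonormalBasis ι 𝕜 E) {i : ι} {y : E} (h : LinearIndependent 𝕜 ![b i, y]) :
    ∃ k ≠ i, ⟪b k, y⟫_𝕜 ≠ 0 := by
  by_contra! hzero
  have hy : ⟪b i, y⟫_𝕜 • b i = y :=
    calc ⟪b i, y⟫_𝕜 • b i = ∑ k, ⟪b k, y⟫_𝕜 • b k := by
          rw [Fintype.sum_eq_single i fun k hk ↦ by rw [hzero k hk, zero_smul]]
      _ = y := b.sum_repr' y
  exact (LinearIndependent.pair_iff' (h.ne_zero 0)).1 h _ hy

theorem toMatrix_mul_toMatrixOrthonormal_mul_conjTranspose [Fintype ι] [DecidableEq ι]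
    [FiniteDimensional 𝕜 E] (a b : OrthonormalBasis ι 𝕜 E) (T : E →ₗ[𝕜] E) :
    b.toBasis.toMatrix a * toMatrixOrthonormal a T * (b.toBasis.toMatrix a)ᴴ =
      toMatrixOrthonormal b T := by
  have hinv : (b.toBasis.toMatrix a)ᴴ = a.toBasis.toMatrix b := by
    ext i j
    simp [Basis.toMatrix_apply, OrthonormalBasis.repr_apply_apply]
  rw [hinv, ← a.coe_toBasis, ← b.coe_toBasis]
  exact basis_toMatrix_mul_linearMap_toMatrix_mul_basis_toMatrix
    b.toBasis a.toBasis b.toBasis a.toBasis T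

end InnerProductSpace

theorem eventually_linearIndependent_pair_map_add_smul {𝕜 E : Type*} [NontriviallyNormedField 𝕜]
    [CompleteSpace 𝕜] [NormedAddCommGroup E] [NormedSpace 𝕜 E] {T : E →ₗ[𝕜] E} {w : E}
    (hw : LinearIndependent 𝕜 ![w, T w]) (x : E) :
    ∀ᶠ t : 𝕜 in 𝓝 0, LinearIndependent 𝕜 ![w + t • x, T (w + t • x)] := by
  have hcont : Continuous fun t : 𝕜 ↦ ![w + t • x, T w + t • T x] := by fun_prop
  have hev := (hcont.tendsto' 0 ![w, T w] (by simp)).eventually hw.eventually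
  simpa only [map_add, map_smul] using hev

section Complex

variable {E : Type*} [NormedAddCommGroup E] [InnerProductSpace ℂ E] {T : E →ₗ[ℂ] E}

theorem exists_linearIndependent_pair_map_inner_ne_zero (hT : ¬ ∃ c : ℂ, T = c • 1) :
    ∃ u, LinearIndependent ℂ ![u, T u] ∧ ⟪u, T u⟫_ℂ ≠ 0 := by
  by_contra! hzero
  obtain ⟨w, hw⟩ : ∃ w, LinearIndependent ℂ ![w, T w] := by
    by_contra! hdep
    exact hT (exists_eq_smul_id_of_forall_notLinearIndependent hdep)
  obtain ⟨x, hx⟩ : ∃ x, ⟪x, T x⟫_ℂ ≠ 0 := by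
    by_contra! hnull
    have hT0 : T = 0 := (inner_map_self_eq_zero T).1 fun x ↦ inner_eq_zero_symm.1 (hnull x)
    exact hT ⟨0, by rw [hT0, zero_smul]⟩
  obtain ⟨t, ⟨hadd, hsub⟩, ht⟩ : ∃ t : ℂ, (LinearIndependent ℂ ![w + t • x, T (w + t • x)] ∧
      LinearIndependent ℂ ![w - t • x, T (w - t • x)]) ∧ t ≠ 0 := by
    have hneg := eventually_linearIndependent_pair_map_add_smul hw (-x)
    simp only [smul_neg, ← sub_eq_add_neg] at hneg
    have hboth := (eventually_linearIndependent_pair_map_add_smul hw x).and hneg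
    exact ((hboth.filter_mono nhdsWithin_le_nhds).and self_mem_nhdsWithin).exists (f := 𝓝[≠] 0)
  have hquad := inner_map_parallelogram_law T w (t • x)
  rw [hzero _ hadd, hzero _ hsub, hzero _ hw] at hquad
  simp [inner_smul_left, inner_smul_right, ht, hx] at hquad

theorem exists_orthonormalBasis_inner_map_ne_zero [FiniteDimensional ℂ E] {ι : Type*} [Fintype ι]
    (hcard : finrank ℂ E = Fintype.card ι) (hT : ¬ ∃ c : ℂ, T = c • 1) (i : ι) :
    ∃ b : OrthonormalBasis ι ℂ E, ⟪b i, T (b i)⟫_ℂ ≠ 0 ∧ ∃ k ≠ i, ⟪b k, T (b i)⟫_ℂ ≠ 0 := by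
  obtain ⟨u, hindep, hinner⟩ := exists_linearIndependent_pair_map_inner_ne_zero hT
  have hu : u ≠ 0 := hindep.ne_zero 0
  have hr : (‖u‖⁻¹ : ℂ) ≠ 0 := by simpa using hu
  obtain ⟨b, hb⟩ := exists_orthonormalBasis_apply_eq_inv_norm_smul hcard i hu
  refine ⟨b, ?_, exists_ne_inner_ne_zero_of_linearIndependent_pair b ?_⟩
  · simp [hb, hu, hinner]
  · rw [hb, map_smul]
    exact (LinearIndependent.pair_smul_smul_iff hr.isUnit hr.isUnit).2 hindep

end Complex

theorem nonscalar_unitary_conjugate_not_monomial_general {n : Type*} [Fintype n] [DecidableEq n]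
    (M : Matrix n n ℂ) (hM : ¬ ∃ c : ℂ, M = c • (1 : Matrix n n ℂ)) :
    ∃ V ∈ Matrix.unitaryGroup n ℂ, ¬ (V * M * Vᴴ).IsMonomial := by
  obtain ⟨i⟩ : Nonempty n := by
    by_contra! hempty
    exact hM ⟨0, Subsingleton.elim _ _⟩
  let e := EuclideanSpace.basisFun n ℂ
  obtain ⟨T, rfl⟩ := EquivLike.surjective (toMatrixOrthonormal e) M
  have hT : ¬ ∃ c : ℂ, T = c • 1 := by
    rintro ⟨c, rfl⟩
    exact hM ⟨c, by rw [map_smul, map_one]⟩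
  obtain ⟨b, hii, k, hki, hk⟩ :=
    exists_orthonormalBasis_inner_map_ne_zero finrank_euclideanSpace hT i
  refine ⟨b.toBasis.toMatrix e, b.toMatrix_orthonormalBasis_mem_unitary e, fun hmon ↦ hki ?_⟩
  rw [toMatrix_mul_toMatrixOrthonormal_mul_conjTranspose] at hmon
  rw [← toMatrixOrthonormal_apply_apply] at hii hk
  exact (hmon.2 i).unique hk hii

/-- **Non-scalar unitaries can be conjugated out of the monomial matrices.**
If `n ≥ 2` and `U` is a unitary `n × n` matrix which is not a scalar multiple of the
identity, then there is a unitary `V` such that `V * U * Vᴴ` is not monomial. -/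
theorem nonscalar_unitary_conjugate_not_monomial
    {n : ℕ} (hn : 2 ≤ n)
    (U : Matrix (Fin n) (Fin n) ℂ) (hU : U ∈ Matrix.unitaryGroup (Fin n) ℂ)
    (hscalar : ¬ ∃ c : ℂ, U = c • (1 : Matrix (Fin n) (Fin n) ℂ)) :
    ∃ V ∈ Matrix.unitaryGroup (Fin n) ℂ, ¬ (V * U * Vᴴ).IsMonomial := by
  exact nonscalar_unitary_conjugate_not_monomial_general U hscalar
end

section
/- Let V₁, …, V_M be unitary n×n complex matrices. Define Δ = {U unitary n×n : U is monomial and V_k U V_k⁻¹ is monomial for every k = 1,…,M} and T = {D unitary n×n : D is diagonal and V_k D V_k⁻¹ is diagonal for every k = 1,…,M}. Then Δ is a subgroup of the unitary group, T is a subgroup of Δ, and T has finite index in Δ (the set of left cosets Δ/T is finite). -/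
/-!
An invertible monomial matrix permutes the coordinate lines, and the matrices inducing the trivial
permutation are exactly the diagonal ones. So the diagonal matrices are the kernel of a
homomorphism to a finite group, and have finite index in the monomial ones. Finite index survives
pulling back along homomorphisms, conjugation by each `V k` in particular, and intersecting finitely
many such pairs of subgroups.

For an infinite family of conjugators, note that being diagonal after conjugation by `V k` is a
linear condition. By finite dimension, finitely many of these conditions imply all the others, so a
finite subfamily already cuts out `T`, and passing to it only enlarges `Δ`.
-/

open scoped Matrix

open Matrix Equiv

section Support

variable {n R : Type*}

/-- The nonzero entries of `A` are exactly those at the positions `(σ j, j)`, so that `A` permutes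
the coordinate lines as `σ` permutes the indices. With this column convention the permutation
of a product is the product of the permutations, in the same order. -/
def HasPermSupport [Zero R] (A : Matrix n n R) (σ : Perm n) : Prop :=
  ∀ i j, A i j ≠ 0 ↔ i = σ j

namespace HasPermSupport

section Zero

variable [Zero R] {A : Matrix n n R} {σ τ : Perm n}

theorem apply_ne_zero (hA : HasPermSupport A σ) (j : n) : A (σ j) j ≠ 0 :=
  (hA _ _).2 rfl

theorem apply_eq_zero (hA : HasPermSupport A σ) {i j : n} (h : i ≠ σ j) : A i j = 0 :=
  not_not.1 (mt (hA i j).1 h)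

theorem perm_unique (hσ : HasPermSupport A σ) (hτ : HasPermSupport A τ) : σ = τ :=
  Equiv.ext fun j => (hτ _ _).1 (hσ.apply_ne_zero j)

end Zero

theorem mul_apply [Fintype n] [NonUnitalNonAssocSemiring R] {A : Matrix n n R} {τ : Perm n}
    {B : Matrix n n R} (hB : HasPermSupport B τ) (i j : n) :
    (A * B) i j = A i (τ j) * B (τ j) j := by
  rw [Matrix.mul_apply]
  exact Fintype.sum_eq_single _ fun k hk => by rw [hB.apply_eq_zero hk, mul_zero]

theorem mul [Fintype n] [NonUnitalNonAssocSemiring R] [NoZeroDivisors R] {A B : Matrix n n R}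
    {σ τ : Perm n} (hA : HasPermSupport A σ) (hB : HasPermSupport B τ) :
    HasPermSupport (A * B) (σ * τ) := fun i j => by
  rw [hB.mul_apply, mul_ne_zero_iff_right (hB.apply_ne_zero j), hA, Perm.mul_apply]

theorem one [DecidableEq n] [Zero R] [One R] [NeZero (1 : R)] :
    HasPermSupport (1 : Matrix n n R) 1 := fun i j => by
  simp [Matrix.one_apply]

theorem of_mul_eq_one [Fintype n] [DecidableEq n] [NonAssocSemiring R] [NoZeroDivisors R]
    [Nontrivial R] {A B : Matrix n n R} {σ : Perm n} (hA : HasPermSupport A σ) (h : B * A = 1) :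
    HasPermSupport B σ⁻¹ := fun i j => by
  obtain ⟨k, rfl⟩ := σ.surjective j
  rw [← mul_ne_zero_iff_right (hA.apply_ne_zero k), ← hA.mul_apply, h, Perm.inv_def,
    symm_apply_apply]
  exact one i k

end HasPermSupport

theorem hasPermSupport_one_iff_isDiag [Fintype n] [DecidableEq n] [NonAssocSemiring R]
    [Nontrivial R] {A B : Matrix n n R} (h : A * B = 1) :
    HasPermSupport A 1 ↔ A.IsDiag := by
  refine ⟨fun hA i j hij => hA.apply_eq_zero hij, fun hA i _ => ⟨fun hij => ?_, ?_⟩⟩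
  · exact not_not.1 (mt (hA ·) hij)
  · rintro rfl (hii : A i i = 0)
    have h_entry : (A * B) i i = A i i * B i i := by
      rw [← hA.diagonal_diag, diagonal_mul, diagonal_apply_eq]
    rw [h, one_apply_eq, hii, zero_mul] at h_entry
    exact one_ne_zero h_entry

theorem isMonomial_iff_exists_hasPermSupport [Fintype n] {A : Matrix n n ℂ} :
    A.IsMonomial ↔ ∃ σ, HasPermSupport A σ := by
  constructor
  · rintro ⟨hrow, hcol⟩
    choose g hg hg_unique using hrow
    choose f hf hf_unique using hcol
    exact ⟨⟨f, g, fun j => (hg_unique _ _ (hf j)).symm, fun i => (hf_unique _ _ (hg i)).symm⟩,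
      fun i j => ⟨hf_unique j i, fun h => h ▸ hf j⟩⟩
  · rintro ⟨σ, hσ⟩
    refine ⟨fun i => ⟨σ⁻¹ i, (hσ _ _).2 (by simp), fun j hj => ?_⟩,
      fun j => ⟨σ j, hσ.apply_ne_zero j, fun i hi => (hσ _ _).1 hi⟩⟩
    rw [(hσ i j).1 hj, Perm.inv_def, symm_apply_apply]

end Support

section GeneralLinear

variable (n R : Type*) [Fintype n] [DecidableEq n] [CommRing R] [IsDomain R]

/-- The group of invertible monomial matrices over `R`. -/
def monomialSubgroup : Subgroup (GL n R) where
  carrier := {A | ∃ σ, HasPermSupport A.val σ}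
  one_mem' := ⟨1, .one⟩
  mul_mem' := fun ⟨_, hσ⟩ ⟨_, hτ⟩ => ⟨_, hσ.mul hτ⟩
  inv_mem' := fun {A} ⟨_, hσ⟩ => ⟨_, hσ.of_mul_eq_one A.inv_mul⟩

/-- The group of invertible diagonal matrices over `R`, described as the monomial matrices whose
permutation is trivial. -/
def diagonalSubgroup : Subgroup (GL n R) where
  carrier := {A | HasPermSupport A.val 1}
  one_mem' := .one
  mul_mem' := fun hA hB => by simpa using hA.mul hB
  inv_mem' := fun {A} hA => by simpa using hA.of_mul_eq_one A.inv_mul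

/-- The permutation of the coordinate lines induced by an invertible monomial matrix. -/
noncomputable def monomialPerm : monomialSubgroup n R →* Perm n :=
  MonoidHom.mk' (fun A => A.2.choose) fun A B =>
    (A * B).2.choose_spec.perm_unique (A.2.choose_spec.mul B.2.choose_spec)

variable {n R}

theorem mem_diagonalSubgroup {A : GL n R} : A ∈ diagonalSubgroup n R ↔ A.val.IsDiag :=
  hasPermSupport_one_iff_isDiag A.mul_inv

theorem mem_monomialSubgroup {A : GL n ℂ} : A ∈ monomialSubgroup n ℂ ↔ A.val.IsMonomial :=
  isMonomial_iff_exists_hasPermSupport.symm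

theorem diagonalSubgroup_le_monomialSubgroup : diagonalSubgroup n R ≤ monomialSubgroup n R :=
  fun _ hA => ⟨1, hA⟩

theorem hasPermSupport_monomialPerm (A : monomialSubgroup n R) :
    HasPermSupport A.1.val (monomialPerm n R A) :=
  A.2.choose_spec

theorem ker_monomialPerm :
    (monomialPerm n R).ker = (diagonalSubgroup n R).subgroupOf (monomialSubgroup n R) := by
  ext A
  have hA := hasPermSupport_monomialPerm A
  rw [MonoidHom.mem_ker]
  refine ⟨fun h => ?_, hA.perm_unique⟩
  rwa [h] at hA

theorem diagonalSubgroup_relIndex_monomialSubgroup_ne_zero :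
    (diagonalSubgroup n R).relIndex (monomialSubgroup n R) ≠ 0 := by
  rw [Subgroup.relIndex, ← ker_monomialPerm]
  exact (Subgroup.finiteIndex_ker (monomialPerm n R)).index_ne_zero

end GeneralLinear

section RelIndex

variable {G G' : Type*} [Group G] [Group G']

theorem relIndex_comap_comap_ne_zero {H K : Subgroup G'} (h : H.relIndex K ≠ 0) (f : G →* G') :
    (H.comap f).relIndex (K.comap f) ≠ 0 := by
  rw [Subgroup.relIndex_comap]
  exact mt (Subgroup.relIndex_eq_zero_of_le_right (Subgroup.map_comap_le f K)) h

theorem relIndex_iInf_iInf_ne_zero {ι : Type*} [Finite ι] {H K : ι → Subgroup G}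
    (h : ∀ i, (H i).relIndex (K i) ≠ 0) : (⨅ i, H i).relIndex (⨅ i, K i) ≠ 0 :=
  Subgroup.relIndex_iInf_ne_zero fun i =>
    mt (Subgroup.relIndex_eq_zero_of_le_right (iInf_le K i)) (h i)

end RelIndex

theorem exists_finset_iInf_subtype_eq_iInf {α ι : Type*} [CompleteLattice α] [WellFoundedLT α]
    (f : ι → α) : ∃ s : Finset ι, ⨅ i : s, f i = ⨅ i, f i := by
  classical
  obtain ⟨_, ⟨s, rfl⟩, hs⟩ := wellFounded_lt.has_min
    (Set.range fun s : Finset ι => s.inf f) (Set.range_nonempty _)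
  have le_of_min (i : ι) : s.inf f ≤ f i := by
    have h_insert : (insert i s).inf f = f i ⊓ s.inf f := Finset.inf_insert
    exact inf_eq_right.1 (inf_le_right.eq_of_not_lt (h_insert ▸ hs _ ⟨insert i s, rfl⟩))
  refine ⟨s, ?_⟩
  rw [iInf_subtype, ← Finset.inf_eq_iInf]
  exact le_antisymm (le_iInf le_of_min) (Finset.le_inf fun i _ => iInf_le f i)

section ConjFamily

variable {G ι : Type*} [Group G]

/-- The elements of `G` all of whose conjugates by members of the family `V` lie in `H`. For the
group of monomial (diagonal) matrices, these are the matrices that are monomial (diagonal) in each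
of the bases described by `V`. -/
def conjFamilyComap (H : Subgroup G) (V : ι → G) : Subgroup G :=
  ⨅ k, H.comap (MulAut.conj (V k)).toMonoidHom

theorem mem_conjFamilyComap {H : Subgroup G} {V : ι → G} {g : G} :
    g ∈ conjFamilyComap H V ↔ ∀ k, V k * g * (V k)⁻¹ ∈ H := by
  simp [conjFamilyComap, Subgroup.mem_iInf]

theorem conjFamilyComap_mono {H K : Subgroup G} (h : H ≤ K) (V : ι → G) :
    conjFamilyComap H V ≤ conjFamilyComap K V :=
  iInf_mono fun _ => Subgroup.comap_mono h

theorem conjFamilyComap_le_comp {κ : Type*} (H : Subgroup G) (V : ι → G) (f : κ → ι) :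
    conjFamilyComap H V ≤ conjFamilyComap H (V ∘ f) :=
  le_iInf fun k => iInf_le _ (f k)

theorem conjFamilyComap_relIndex_ne_zero [Finite ι] {H K : Subgroup G} (h : H.relIndex K ≠ 0)
    (V : ι → G) : (conjFamilyComap H V).relIndex (conjFamilyComap K V) ≠ 0 :=
  relIndex_iInf_iInf_ne_zero fun _ => relIndex_comap_comap_ne_zero h _

end ConjFamily

section SimultaneouslyDiagonal

variable {n R K ι : Type*} [Fintype n] [DecidableEq n]

/-- The matrices, invertible or not, that become diagonal after conjugation by `V`. They form a
linear space, so that finite dimension bounds the number of conjugators that matter. -/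
def conjDiagonalSubmodule [CommRing R] (V : GL n R) : Submodule R (Matrix n n R) where
  carrier := {A | (V.val * A * V⁻¹.val).IsDiag}
  zero_mem' := by simp
  add_mem' hA hB := by simpa [mul_add, add_mul] using IsDiag.add hA hB
  smul_mem' c _ hA := by simpa using IsDiag.smul c hA

theorem mem_conjFamilyComap_diagonalSubgroup [CommRing R] [IsDomain R] {V : ι → GL n R}
    {A : GL n R} :
    A ∈ conjFamilyComap (diagonalSubgroup n R) V ↔
      A.val ∈ ⨅ k, conjDiagonalSubmodule (V k) := by
  simp only [mem_conjFamilyComap, mem_diagonalSubgroup, Submodule.mem_iInf]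
  rfl

variable [Field K]

theorem exists_finset_conjFamilyComap_diagonalSubgroup_eq (V : ι → GL n K) :
    ∃ s : Finset ι, conjFamilyComap (diagonalSubgroup n K) (V ∘ ((↑) : s → ι)) =
      conjFamilyComap (diagonalSubgroup n K) V := by
  obtain ⟨s, hs⟩ := exists_finset_iInf_subtype_eq_iInf fun k => conjDiagonalSubmodule (V k)
  refine ⟨s, Subgroup.ext fun A => ?_⟩
  rw [mem_conjFamilyComap_diagonalSubgroup, mem_conjFamilyComap_diagonalSubgroup, ← hs]
  rfl

theorem conjFamilyComap_diagonalSubgroup_relIndex_ne_zero (V : ι → GL n K) :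
    (conjFamilyComap (diagonalSubgroup n K) V).relIndex
      (conjFamilyComap (monomialSubgroup n K) V) ≠ 0 := by
  obtain ⟨s, hs⟩ := exists_finset_conjFamilyComap_diagonalSubgroup_eq V
  rw [← hs]
  exact mt (Subgroup.relIndex_eq_zero_of_le_right (conjFamilyComap_le_comp _ V _))
    (conjFamilyComap_relIndex_ne_zero diagonalSubgroup_relIndex_monomialSubgroup_ne_zero _)

end SimultaneouslyDiagonal

theorem protected_gates_finite_up_to_diagonal_general
    {G n ι : Type*} [Group G] [Fintype n] [DecidableEq n]
    (ρ : G →* GL n ℂ) (V : ι → GL n ℂ) :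
    ∃ HΔ HT : Subgroup G,
      (∀ g, g ∈ HΔ ↔ (ρ g).val.IsMonomial ∧
        ∀ k, ((V k).val * (ρ g).val * (V k)⁻¹.val).IsMonomial) ∧
      (∀ g, g ∈ HT ↔ (ρ g).val.IsDiag ∧
        ∀ k, ((V k).val * (ρ g).val * (V k)⁻¹.val).IsDiag) ∧
      HT ≤ HΔ ∧ (HT.subgroupOf HΔ).FiniteIndex := by
  -- The extra conjugator `1` accounts for the condition on `ρ g` itself.
  let W : Option ι → GL n ℂ := fun k => k.elim 1 V
  refine ⟨(conjFamilyComap (monomialSubgroup n ℂ) W).comap ρ,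
    (conjFamilyComap (diagonalSubgroup n ℂ) W).comap ρ, fun g => ?_, fun g => ?_, ?_, ⟨?_⟩⟩
  · simp [mem_conjFamilyComap, mem_monomialSubgroup, Option.forall, W]
  · simp [mem_conjFamilyComap, mem_diagonalSubgroup, Option.forall, W]
  · exact Subgroup.comap_mono (conjFamilyComap_mono diagonalSubgroup_le_monomialSubgroup W)
  · exact relIndex_comap_comap_ne_zero (conjFamilyComap_diagonalSubgroup_relIndex_ne_zero W) ρ

/-- **Finiteness of the group of protected gates up to equivalence.**
Given unitaries `V₁, …, V_M`, the set `Δ` of monomial unitaries remaining monomial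
under conjugation by every `V_k` is a subgroup of the unitary group, the set `T` of
diagonal unitaries remaining diagonal under conjugation by every `V_k` is a subgroup
of `Δ`, and `T` has finite index in `Δ`. -/
theorem protected_gates_finite_up_to_diagonal
    (n M : ℕ) (V : Fin M → Matrix.unitaryGroup (Fin n) ℂ) :
    ∃ HΔ HT : Subgroup (Matrix.unitaryGroup (Fin n) ℂ),
      (∀ U : Matrix.unitaryGroup (Fin n) ℂ,
        U ∈ HΔ ↔ ((U : Matrix (Fin n) (Fin n) ℂ).IsMonomial ∧
          ∀ k : Fin M,
            ((V k : Matrix (Fin n) (Fin n) ℂ) * (U : Matrix (Fin n) (Fin n) ℂ) *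
              (((V k)⁻¹ : Matrix.unitaryGroup (Fin n) ℂ) :
                Matrix (Fin n) (Fin n) ℂ)).IsMonomial)) ∧
      (∀ D : Matrix.unitaryGroup (Fin n) ℂ,
        D ∈ HT ↔ ((D : Matrix (Fin n) (Fin n) ℂ).IsDiag ∧
          ∀ k : Fin M,
            ((V k : Matrix (Fin n) (Fin n) ℂ) * (D : Matrix (Fin n) (Fin n) ℂ) *
              (((V k)⁻¹ : Matrix.unitaryGroup (Fin n) ℂ) :
                Matrix (Fin n) (Fin n) ℂ)).IsDiag)) ∧
      HT ≤ HΔ ∧ (HT.subgroupOf HΔ).FiniteIndex :=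
  protected_gates_finite_up_to_diagonal_general Unitary.toUnits fun k => Unitary.toUnits (V k)
end

section
/- Let φ = (1+√5)/2 and let S be the 2×2 real matrix S = (1/√(φ+2))·[[1, φ], [φ, −1]]. Then the set of monomial unitary 2×2 complex matrices U such that S U S⁻¹ is monomial equals {λ·I : λ ∈ ℂ, |λ| = 1} ∪ {λ·[[0, 1], [−1, 0]] : λ ∈ ℂ, |λ| = 1}. -/
open scoped Matrix

/-!
For `S = [[a, b], [c, d]]`, the entries of `S U S⁻¹` are, up to the common factor `1 / det S`,
linear forms in the two non-zero entries `u`, `v` of `U`. If conjugation by `S` exchanged the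
diagonal and the antidiagonal shape, then two of these forms would vanish, and eliminating `v`
would give `(ad)² u = (bc)² u`. So when `(ad)² ≠ (bc)²` the shape is preserved. The off-diagonal
entries of `S [[u, 0], [0, v]] S⁻¹` are multiples of `u - v`, and the diagonal entries of
`S [[0, u], [v, 0]] S⁻¹` are multiples of `ac u - bd v`, so if `S` has no zero entry then the ratio
`v / u` is determined by the shape. For the Fibonacci `S`-matrix, `(ad)² ≠ (bc)²` amounts to
`φ⁴ ≠ 1`, and `ac = -bd`.
-/

section IsMonomial

variable {n : Type*} [Fintype n]

theorem isMonomial_smul_iff {k : ℂ} (hk : k ≠ 0) {M : Matrix n n ℂ} :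
    (k • M).IsMonomial ↔ M.IsMonomial := by
  simp [Matrix.IsMonomial, hk]

theorem isMonomial_conj_iff_adjugate [DecidableEq n] {S : Matrix n n ℂ} (hS : S.det ≠ 0)
    (U : Matrix n n ℂ) : (S * U * S⁻¹).IsMonomial ↔ (S * U * S.adjugate).IsMonomial := by
  rw [Matrix.inv_def, Matrix.mul_smul, Ring.inverse_eq_inv', isMonomial_smul_iff (inv_ne_zero hS)]

theorem isMonomial_fin_two_iff {p q r s : ℂ} :
    !![p, q; r, s].IsMonomial ↔
      (p ≠ 0 ∧ s ≠ 0 ∧ q = 0 ∧ r = 0) ∨ (p = 0 ∧ s = 0 ∧ q ≠ 0 ∧ r ≠ 0) := by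
  simp only [Matrix.IsMonomial, ExistsUnique, Fin.forall_fin_two, Fin.exists_fin_two]
  by_cases hp : p = 0 <;> by_cases hq : q = 0 <;> by_cases hr : r = 0 <;>
    by_cases hs : s = 0 <;> simp [hp, hq, hr, hs]

end IsMonomial

section FinTwo

variable {R : Type*} [CommRing R] (a b c d u v : R)

theorem mul_diagonal_mul_adjugate_fin_two :
    !![a, b; c, d] * !![u, 0; 0, v] * !![a, b; c, d].adjugate =
      !![a * d * u - b * c * v, a * b * (v - u); c * d * (u - v), a * d * v - b * c * u] := by
  simp only [Matrix.adjugate_fin_two_of, Matrix.mul_fin_two]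
  ext i j
  fin_cases i <;> fin_cases j <;> simp <;> ring

theorem mul_antidiagonal_mul_adjugate_fin_two :
    !![a, b; c, d] * !![0, u; v, 0] * !![a, b; c, d].adjugate =
      !![b * d * v - a * c * u, a ^ 2 * u - b ^ 2 * v;
        d ^ 2 * v - c ^ 2 * u, a * c * u - b * d * v] := by
  simp only [Matrix.adjugate_fin_two_of, Matrix.mul_fin_two]
  ext i j
  fin_cases i <;> fin_cases j <;> simp <;> ring

theorem det_fin_two_ne_zero_of_sq_ne_sq {a b c d : R} (hsq : (a * d) ^ 2 ≠ (b * c) ^ 2) :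
    !![a, b; c, d].det ≠ 0 := by
  rw [Matrix.det_fin_two_of, sub_ne_zero]
  exact ne_of_apply_ne (· ^ 2) hsq

end FinTwo

section Conjugation

variable {a b c d u v : ℂ}

theorem isMonomial_conj_diagonal_iff (hab : a * b ≠ 0) (hsq : (a * d) ^ 2 ≠ (b * c) ^ 2)
    (hu : u ≠ 0) :
    (!![a, b; c, d] * !![u, 0; 0, v] * !![a, b; c, d]⁻¹).IsMonomial ↔ v = u := by
  have hdet := det_fin_two_ne_zero_of_sq_ne_sq hsq
  rw [isMonomial_conj_iff_adjugate hdet, mul_diagonal_mul_adjugate_fin_two, isMonomial_fin_two_iff]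
  constructor
  · rintro (⟨-, -, h₀₁, -⟩ | ⟨h₀₀, h₁₁, -, -⟩)
    · exact sub_eq_zero.mp ((mul_eq_zero_iff_left hab).mp h₀₁)
    · have hswap : (a * d) ^ 2 * u = (b * c) ^ 2 * u := by
        linear_combination a * d * h₀₀ + b * c * h₁₁
      exact absurd (mul_right_cancel₀ hu hswap) hsq
  · rintro rfl
    rw [Matrix.det_fin_two_of] at hdet
    left
    simp [← sub_mul, hdet, hu]

theorem isMonomial_conj_antidiagonal_iff {ω : ℂ} (hω : a * c = ω * (b * d)) (hac : a * c ≠ 0)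
    (hsq : (a * d) ^ 2 ≠ (b * c) ^ 2) (hu : u ≠ 0) :
    (!![a, b; c, d] * !![0, u; v, 0] * !![a, b; c, d]⁻¹).IsMonomial ↔ v = ω * u := by
  have hdet := det_fin_two_ne_zero_of_sq_ne_sq hsq
  rw [isMonomial_conj_iff_adjugate hdet, mul_antidiagonal_mul_adjugate_fin_two,
    isMonomial_fin_two_iff]
  constructor
  · rintro (⟨-, -, h₀₁, h₁₀⟩ | ⟨h₀₀, -, -, -⟩)
    · have hswap : (a * d) ^ 2 * u = (b * c) ^ 2 * u := by
        linear_combination d ^ 2 * h₀₁ + b ^ 2 * h₁₀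
      exact absurd (mul_right_cancel₀ hu hswap) hsq
    · have hbd : b * d ≠ 0 := right_ne_zero_of_mul (hω ▸ hac)
      exact mul_left_cancel₀ hbd (by linear_combination h₀₀ + u * hω)
  · rintro rfl
    rw [Matrix.det_fin_two_of] at hdet
    have h₀₁ : d * (a ^ 2 * u - b ^ 2 * (ω * u)) = a * u * (a * d - b * c) := by
      linear_combination b * u * hω
    have h₁₀ : b * (d ^ 2 * (ω * u) - c ^ 2 * u) = c * u * (a * d - b * c) := by
      linear_combination -d * u * hω
    have ha : a ≠ 0 := left_ne_zero_of_mul hac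
    have hc : c ≠ 0 := right_ne_zero_of_mul hac
    refine Or.inr ⟨by linear_combination -u * hω, by linear_combination u * hω, ?_, ?_⟩
    · exact right_ne_zero_of_mul (h₀₁ ▸ mul_ne_zero (mul_ne_zero ha hu) hdet)
    · exact right_ne_zero_of_mul (h₁₀ ▸ mul_ne_zero (mul_ne_zero hc hu) hdet)

end Conjugation

section Unitary

variable {𝕜 : Type*} [RCLike 𝕜] {u v : 𝕜}

theorem mul_star_self_eq_one_iff_norm_eq_one : u * star u = 1 ↔ ‖u‖ = 1 := by
  rw [RCLike.star_def, RCLike.mul_conj]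
  norm_cast
  exact pow_eq_one_iff_of_nonneg (norm_nonneg u) two_ne_zero

theorem diagonal_mem_unitaryGroup_fin_two_iff :
    !![u, 0; 0, v] ∈ Matrix.unitaryGroup (Fin 2) 𝕜 ↔ ‖u‖ = 1 ∧ ‖v‖ = 1 := by
  simp [Matrix.mem_unitaryGroup_iff, ← Matrix.ext_iff, Fin.forall_fin_two, Matrix.vecMul,
    dotProduct, ← mul_star_self_eq_one_iff_norm_eq_one]

theorem antidiagonal_mem_unitaryGroup_fin_two_iff :
    !![0, u; v, 0] ∈ Matrix.unitaryGroup (Fin 2) 𝕜 ↔ ‖u‖ = 1 ∧ ‖v‖ = 1 := by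
  simp [Matrix.mem_unitaryGroup_iff, ← Matrix.ext_iff, Fin.forall_fin_two, Matrix.vecMul,
    dotProduct, ← mul_star_self_eq_one_iff_norm_eq_one]

end Unitary

theorem fibonacci_S_intertwiners_general {a b c d ω : ℂ} (hω : ‖ω‖ = 1)
    (hacbd : a * c = ω * (b * d)) (hac : a * c ≠ 0) (hsq : (a * d) ^ 2 ≠ (b * c) ^ 2)
    {S : Matrix (Fin 2) (Fin 2) ℂ} (hS : S = !![a, b; c, d]) :
    {U : Matrix (Fin 2) (Fin 2) ℂ |
        U ∈ Matrix.unitaryGroup (Fin 2) ℂ ∧ U.IsMonomial ∧ (S * U * S⁻¹).IsMonomial} =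
      {U : Matrix (Fin 2) (Fin 2) ℂ | ∃ lam : ℂ, ‖lam‖ = 1 ∧
        (U = lam • (1 : Matrix (Fin 2) (Fin 2) ℂ) ∨ U = lam • !![0, 1; ω, 0])} := by
  subst hS
  have hab : a * b ≠ 0 :=
    mul_ne_zero (left_ne_zero_of_mul hac)
      (left_ne_zero_of_mul (right_ne_zero_of_mul (hacbd ▸ hac)))
  have hone (k : ℂ) : k • (1 : Matrix (Fin 2) (Fin 2) ℂ) = !![k, 0; 0, k] := by
    simp [Matrix.one_fin_two]
  have hanti (k : ℂ) : k • !![0, 1; ω, 0] = !![0, k; ω * k, 0] := by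
    simp [mul_comm]
  ext U
  simp only [Set.mem_ofPred_eq, hone, hanti]
  constructor
  · obtain ⟨p, q, r, s, rfl⟩ : ∃ p q r s, U = !![p, q; r, s] := ⟨_, _, _, _, U.eta_fin_two⟩
    rintro ⟨hU, hmono, hconj⟩
    obtain ⟨hp, -, rfl, rfl⟩ | ⟨rfl, rfl, hq, -⟩ := isMonomial_fin_two_iff.mp hmono
    · obtain rfl := (isMonomial_conj_diagonal_iff hab hsq hp).mp hconj
      exact ⟨s, (diagonal_mem_unitaryGroup_fin_two_iff.mp hU).1, Or.inl rfl⟩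
    · obtain rfl := (isMonomial_conj_antidiagonal_iff hacbd hac hsq hq).mp hconj
      exact ⟨q, (antidiagonal_mem_unitaryGroup_fin_two_iff.mp hU).1, Or.inr rfl⟩
  · rintro ⟨k, hk, hU⟩
    have hk₀ : k ≠ 0 := norm_ne_zero_iff.mp (hk ▸ one_ne_zero)
    obtain rfl | rfl := hU
    · exact ⟨diagonal_mem_unitaryGroup_fin_two_iff.mpr ⟨hk, hk⟩,
        isMonomial_fin_two_iff.mpr (Or.inl ⟨hk₀, hk₀, rfl, rfl⟩),
        (isMonomial_conj_diagonal_iff hab hsq hk₀).mpr rfl⟩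
    · have hω₀ : ω ≠ 0 := norm_ne_zero_iff.mp (hω ▸ one_ne_zero)
      exact ⟨antidiagonal_mem_unitaryGroup_fin_two_iff.mpr ⟨hk, by simp [hω, hk]⟩,
        isMonomial_fin_two_iff.mpr (Or.inr ⟨rfl, rfl, hk₀, mul_ne_zero hω₀ hk₀⟩),
        (isMonomial_conj_antidiagonal_iff hacbd hac hsq hk₀).mpr rfl⟩

/-- **The intertwiners of the Fibonacci `S`-matrix.**
With `φ = (1+√5)/2` and `S = (1/√(φ+2)) [[1, φ], [φ, −1]]`, the monomial unitary `2 × 2`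
matrices `U` such that `S U S⁻¹` is monomial are exactly the unimodular multiples of the
identity and of `[[0, 1], [−1, 0]]`. -/
theorem fibonacci_S_intertwiners :
    ∀ (φ : ℝ), φ = (1 + Real.sqrt 5) / 2 →
    ∀ S : Matrix (Fin 2) (Fin 2) ℂ,
      S = ((Real.sqrt (φ + 2) : ℂ))⁻¹ • !![1, (φ : ℂ); (φ : ℂ), -1] →
    {U : Matrix (Fin 2) (Fin 2) ℂ |
        U ∈ Matrix.unitaryGroup (Fin 2) ℂ ∧ U.IsMonomial ∧ (S * U * S⁻¹).IsMonomial} =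
      {U : Matrix (Fin 2) (Fin 2) ℂ | ∃ lam : ℂ, ‖lam‖ = 1 ∧
        (U = lam • (1 : Matrix (Fin 2) (Fin 2) ℂ) ∨ U = lam • !![0, 1; -1, 0])} := by
  intro φ hφ S hS
  have hφ₁ : 1 < φ := hφ ▸ Real.one_lt_goldenRatio
  have hφ₀ : (φ : ℂ) ≠ 0 := by exact_mod_cast (one_pos.trans hφ₁).ne'
  have hφ₄ : (φ : ℂ) ^ 4 ≠ 1 := by exact_mod_cast (one_lt_pow₀ hφ₁ four_ne_zero).ne'
  set k : ℂ := (√(φ + 2) : ℂ)⁻¹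
  have hk₀ : k ≠ 0 := by
    have : √(φ + 2) ≠ 0 := (Real.sqrt_pos.mpr (by linarith)).ne'
    exact inv_ne_zero (by exact_mod_cast this)
  have hsq : (k * -k) ^ 2 ≠ (k * φ * (k * φ)) ^ 2 := fun h =>
    hφ₄ (mul_left_cancel₀ (pow_ne_zero 4 hk₀) (by linear_combination -h))
  exact fibonacci_S_intertwiners_general (by simp) (by ring)
    (mul_ne_zero hk₀ (mul_ne_zero hk₀ hφ₀)) hsq (by simpa using hS)
end

section
/- Let φ = (1+√5)/2, let S = (1/√(φ+2))·[[1, φ], [φ, −1]], and let T = diag(1, e^{4πi/5}). If U is a monomial unitary 2×2 complex matrix such that both S U S⁻¹ and (S T) U (S T)⁻¹ are monomial, then U = λ·I for some λ ∈ ℂ with |λ| = 1. In other words, Δ_s ∩ Δ_{st} = {λ·I : |λ| = 1}. -/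
open scoped Matrix

/-!
Conjugating a monomial `2 × 2` matrix by `A = !![a, b; c, d]` can turn a diagonal matrix into an
antidiagonal one, or vice versa, only if `(a * d) ^ 2 = (b * c) ^ 2`, which both `S` and `S * T`
avoid because `φ ^ 4 ≠ 1`. A diagonal matrix that stays diagonal is scalar as soon as `a * b ≠ 0`.
An antidiagonal `U` that stays antidiagonal satisfies `a * c * U 0 1 = b * d * U 1 0`; for `S` this
reads `U 0 1 = -U 1 0` and for `S * T` it reads `U 0 1 = -t ^ 2 * U 1 0`, where `t` is the phase
in `T`. These are incompatible since `t ^ 2 ≠ 1`.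
-/

section Monomial

variable {n : Type*} [Fintype n]

theorem isMonomial_of_isMonomial_smul {r : ℂ} {M : Matrix n n ℂ} (h : (r • M).IsMonomial) :
    M.IsMonomial := by
  constructor
  · intro i
    obtain ⟨j, hij, -⟩ := h.1 i
    have hr : r ≠ 0 := left_ne_zero_of_mul hij
    simpa [hr] using h.1 i
  · intro j
    obtain ⟨i, hij, -⟩ := h.2 j
    have hr : r ≠ 0 := left_ne_zero_of_mul hij
    simpa [hr] using h.2 j

theorem isMonomial_mul_mul_adjugate_of_smul [DecidableEq n] {r : ℂ} {A M : Matrix n n ℂ}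
    (h : ((r • A) * M * (r • A)⁻¹).IsMonomial) : (A * M * A.adjugate).IsMonomial := by
  simp only [Matrix.inv_def, Matrix.adjugate_smul, Matrix.smul_mul, Matrix.mul_smul,
    smul_smul] at h
  exact isMonomial_of_isMonomial_smul h

theorem exists_eq_diag_or_antidiag_of_isMonomial {M : Matrix (Fin 2) (Fin 2) ℂ}
    (h : M.IsMonomial) :
    ∃ x y, x ≠ 0 ∧ y ≠ 0 ∧ (M = !![x, 0; 0, y] ∨ M = !![0, x; y, 0]) := by
  obtain ⟨hrow, hcol⟩ := h
  obtain ⟨j, hj, hj_unique⟩ := hrow 0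
  obtain ⟨k, hk, hk_unique⟩ := hrow 1
  have hjk : j ≠ k := by
    rintro rfl
    exact zero_ne_one ((hcol j).unique hj hk)
  have h0 (l : Fin 2) (hl : l ≠ j) : M 0 l = 0 := not_not.mp (mt (hj_unique l) hl)
  have h1 (l : Fin 2) (hl : l ≠ k) : M 1 l = 0 := not_not.mp (mt (hk_unique l) hl)
  refine ⟨M 0 j, M 1 k, hj, hk, ?_⟩
  rw [Matrix.eta_fin_two M]
  fin_cases j <;> fin_cases k
  · exact absurd rfl hjk
  · left
    simp [h0 1 (by decide), h1 0 (by decide)]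
  · right
    simp [h0 0 (by decide), h1 1 (by decide)]
  · exact absurd rfl hjk

end Monomial

section Conjugation

variable {R : Type*} [CommRing R]

theorem mul_diag_mul_adjugate_fin_two (a b c d x y : R) :
    !![a, b; c, d] * !![x, 0; 0, y] * (!![a, b; c, d]).adjugate =
      !![a * d * x - b * c * y, a * b * (y - x); c * d * (x - y), a * d * y - b * c * x] := by
  ext i j
  fin_cases i <;> fin_cases j <;> simp [Matrix.adjugate_fin_two_of] <;> ring

theorem mul_antidiag_mul_adjugate_fin_two (a b c d x y : R) :
    !![a, b; c, d] * !![0, x; y, 0] * (!![a, b; c, d]).adjugate =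
      !![b * d * y - a * c * x, a ^ 2 * x - b ^ 2 * y;
        d ^ 2 * y - c ^ 2 * x, a * c * x - b * d * y] := by
  ext i j
  fin_cases i <;> fin_cases j <;> simp [Matrix.adjugate_fin_two_of] <;> ring

end Conjugation

section MonomialConjugation

variable {a b c d : ℂ}

theorem eq_of_isMonomial_mul_diag_mul_adjugate {x y : ℂ} (hA : (a * d) ^ 2 ≠ (b * c) ^ 2)
    (hab : a * b ≠ 0) (hx : x ≠ 0)
    (h : (!![a, b; c, d] * !![x, 0; 0, y] * (!![a, b; c, d]).adjugate).IsMonomial) : x = y := by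
  rw [mul_diag_mul_adjugate_fin_two] at h
  obtain ⟨_, _, -, -, hdiag | hanti⟩ := exists_eq_diag_or_antidiag_of_isMonomial h
  · have h01 : a * b * (y - x) = 0 := congr_fun₂ hdiag 0 1
    exact (sub_eq_zero.mp ((mul_eq_zero_iff_left hab).mp h01)).symm
  · have h00 : a * d * x - b * c * y = 0 := congr_fun₂ hanti 0 0
    have h11 : a * d * y - b * c * x = 0 := congr_fun₂ hanti 1 1
    refine absurd (mul_right_cancel₀ hx ?_) hA
    linear_combination a * d * h00 + b * c * h11

theorem mul_eq_mul_of_isMonomial_mul_antidiag_mul_adjugate {x y : ℂ}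
    (hA : (a * d) ^ 2 ≠ (b * c) ^ 2) (hx : x ≠ 0)
    (h : (!![a, b; c, d] * !![0, x; y, 0] * (!![a, b; c, d]).adjugate).IsMonomial) :
    a * c * x = b * d * y := by
  rw [mul_antidiag_mul_adjugate_fin_two] at h
  obtain ⟨_, _, -, -, hdiag | hanti⟩ := exists_eq_diag_or_antidiag_of_isMonomial h
  · have h01 : a ^ 2 * x - b ^ 2 * y = 0 := congr_fun₂ hdiag 0 1
    have h10 : d ^ 2 * y - c ^ 2 * x = 0 := congr_fun₂ hdiag 1 0
    refine absurd (mul_right_cancel₀ hx ?_) hA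
    linear_combination d ^ 2 * h01 + b ^ 2 * h10
  · exact sub_eq_zero.mp (congr_fun₂ hanti 1 1)

theorem exists_eq_smul_one_of_isMonomial_mul_mul_adjugate {p t : ℂ} (hp : p ≠ 0)
    (hp4 : p ^ 4 ≠ 1) (ht : t ≠ 0) (ht2 : t ^ 2 ≠ 1) {U : Matrix (Fin 2) (Fin 2) ℂ}
    (hU : U.IsMonomial)
    (hS : (!![1, p; p, -1] * U * (!![1, p; p, -1]).adjugate).IsMonomial)
    (hST : (!![1, p * t; p, -t] * U * (!![1, p * t; p, -t]).adjugate).IsMonomial) :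
    ∃ lam : ℂ, U = lam • (1 : Matrix (Fin 2) (Fin 2) ℂ) := by
  have hS_ne : (1 * -1 : ℂ) ^ 2 ≠ (p * p) ^ 2 := by
    contrapose! hp4
    linear_combination -hp4
  have hST_ne : (1 * -t) ^ 2 ≠ (p * t * p) ^ 2 := by
    contrapose! hp4
    refine mul_right_cancel₀ (pow_ne_zero 2 ht) ?_
    linear_combination -hp4
  obtain ⟨x, y, hx, hy, rfl | rfl⟩ := exists_eq_diag_or_antidiag_of_isMonomial hU
  · obtain rfl := eq_of_isMonomial_mul_diag_mul_adjugate hS_ne (by simpa using hp) hx hS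
    exact ⟨x, by simp [Matrix.one_fin_two]⟩
  · have hS_eq := mul_eq_mul_of_isMonomial_mul_antidiag_mul_adjugate hS_ne hx hS
    have hST_eq := mul_eq_mul_of_isMonomial_mul_antidiag_mul_adjugate hST_ne hx hST
    refine absurd (mul_right_cancel₀ (mul_ne_zero hp hy) ?_) ht2
    linear_combination hST_eq - hS_eq

end MonomialConjugation

theorem norm_eq_one_of_smul_one_mem_unitaryGroup {R n : Type*} [NormedCommRing R]
    [StarRing R] [CStarRing R] [Nontrivial R] [Fintype n] [DecidableEq n] [Nonempty n] {lam : R}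
    (h : lam • (1 : Matrix n n R) ∈ Matrix.unitaryGroup n R) : ‖lam‖ = 1 := by
  obtain ⟨i⟩ := ‹Nonempty n›
  have hlam : star lam * lam = 1 := by
    simpa using congr_fun₂ (Matrix.mem_unitaryGroup_iff.mp h) i i
  exact CStarRing.norm_of_mem_unitary (Unitary.mem_iff_star_mul_self.mpr hlam)

theorem isPrimitiveRoot_exp_four_pi_I_div_five :
    IsPrimitiveRoot (Complex.exp (4 * Real.pi * Complex.I / 5)) 5 := by
  convert Complex.isPrimitiveRoot_exp_of_coprime 2 5 (by norm_num) (by norm_num) using 2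
  push_cast
  ring

theorem fibonacci_torus_no_protected_gate_general {r p t : ℂ} (hp : p ≠ 0) (hp4 : p ^ 4 ≠ 1)
    (ht : t ≠ 0) (ht2 : t ^ 2 ≠ 1) {S T U : Matrix (Fin 2) (Fin 2) ℂ}
    (hS : S = r • !![1, p; p, -1]) (hT : T = !![1, 0; 0, t])
    (hU : U ∈ Matrix.unitaryGroup (Fin 2) ℂ) (hUmono : U.IsMonomial)
    (hS_int : (S * U * S⁻¹).IsMonomial) (hST_int : ((S * T) * U * (S * T)⁻¹).IsMonomial) :
    ∃ lam : ℂ, ‖lam‖ = 1 ∧ U = lam • (1 : Matrix (Fin 2) (Fin 2) ℂ) := by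
  have hST : S * T = r • !![1, p * t; p, -t] := by
    simp [hS, hT, mul_assoc]
  rw [hS] at hS_int
  rw [hST] at hST_int
  obtain ⟨lam, rfl⟩ := exists_eq_smul_one_of_isMonomial_mul_mul_adjugate hp hp4 ht ht2 hUmono
    (isMonomial_mul_mul_adjugate_of_smul hS_int) (isMonomial_mul_mul_adjugate_of_smul hST_int)
  exact ⟨lam, norm_eq_one_of_smul_one_mem_unitaryGroup hU, rfl⟩

/-- **No non-trivial protected gate for the Fibonacci model on the torus.**
With `φ = (1+√5)/2`, `S = (1/√(φ+2)) [[1, φ], [φ, −1]]` and `T = diag(1, e^{4πi/5})`,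
any monomial unitary `2 × 2` matrix `U` such that both `S U S⁻¹` and
`(S T) U (S T)⁻¹` are monomial is a unimodular scalar multiple of the identity. -/
theorem fibonacci_torus_no_protected_gate
    (φ : ℝ) (hφ : φ = (1 + Real.sqrt 5) / 2)
    (S : Matrix (Fin 2) (Fin 2) ℂ)
    (hS : S = ((Real.sqrt (φ + 2) : ℂ))⁻¹ • !![1, (φ : ℂ); (φ : ℂ), -1])
    (T : Matrix (Fin 2) (Fin 2) ℂ)
    (hT : T = !![1, 0; 0, Complex.exp (4 * Real.pi * Complex.I / 5)])
    (U : Matrix (Fin 2) (Fin 2) ℂ) (hU : U ∈ Matrix.unitaryGroup (Fin 2) ℂ)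
    (hUmono : U.IsMonomial)
    (hS_int : (S * U * S⁻¹).IsMonomial)
    (hST_int : ((S * T) * U * (S * T)⁻¹).IsMonomial) :
    ∃ lam : ℂ, ‖lam‖ = 1 ∧ U = lam • (1 : Matrix (Fin 2) (Fin 2) ℂ) := by
  have hφ1 : 1 < φ := hφ ▸ Real.one_lt_goldenRatio
  have hφ4 : φ ^ 4 ≠ 1 := (one_lt_pow₀ hφ1 four_ne_zero).ne'
  exact fibonacci_torus_no_protected_gate_general
    (by exact_mod_cast (zero_lt_one.trans hφ1).ne') (by exact_mod_cast hφ4)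
    (Complex.exp_ne_zero _)
    (isPrimitiveRoot_exp_four_pi_I_div_five.pow_ne_one_of_pos_of_lt two_ne_zero (by norm_num))
    hS hT hU hUmono hS_int hST_int
end

section
/- Let V₁, …, V_M be unitary n×n complex matrices, and define Δ = {U unitary n×n : U is monomial and V_k U V_k⁻¹ is monomial for every k} and T = {D unitary n×n : D is diagonal and V_k D V_k⁻¹ is diagonal for every k}. Let L = lcm(1, 2, …, n). Then for every U ∈ Δ, the power U^L belongs to T; in particular U^L is diagonal and V_k U^L V_k⁻¹ is diagonal for every k. -/
open scoped Matrix

/-!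
The support of a monomial matrix is the graph of a permutation `σ`, and the support of its `k`-th
power is contained in the graph of `σ ^ k`. The cycles of `σ` have length at most `n`, so
`σ ^ lcm (1, …, n) = 1` and the corresponding power of the matrix is diagonal. Since
`V * U ^ k * V⁻¹ = (V * U * V⁻¹) ^ k`, the same argument applies after conjugation.
-/

theorem orderOf_perm_dvd_lcm_Icc_card {α : Type*} [Fintype α] (σ : Equiv.Perm α) :
    orderOf σ ∣ (Finset.Icc 1 (Fintype.card α)).lcm id := by
  classical
  rw [← σ.lcm_cycleType, Multiset.lcm_dvd]
  intro c hc
  have one_le : 1 ≤ c := (Equiv.Perm.one_lt_of_mem_cycleType hc).le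
  have le_card : c ≤ Fintype.card α :=
    (Equiv.Perm.le_card_support_of_mem_cycleType hc).trans (Finset.card_le_univ _)
  exact Finset.dvd_lcm (f := id) (Finset.mem_Icc.mpr ⟨one_le, le_card⟩)

/-- The nonzero entries of `A` lie on the graph of `f`. Columns are sent to rows, as for the matrix
of the map `e_j ↦ e_{f j}`, so that products of matrices correspond to composition. -/
def SupportedOnGraph {m n R : Type*} [Zero R] (A : Matrix m n R) (f : n → m) : Prop :=
  ∀ ⦃i j⦄, A i j ≠ 0 → i = f j

namespace SupportedOnGraph

theorem isDiag {n R : Type*} [Zero R] {A : Matrix n n R} (hA : SupportedOnGraph A id) :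
    A.IsDiag :=
  fun _ _ hij => by_contra fun h => hij (hA h)

theorem one {n R : Type*} [DecidableEq n] [Zero R] [One R] :
    SupportedOnGraph (1 : Matrix n n R) id :=
  fun _ _ h => by_contra fun hij => h (Matrix.one_apply_ne hij)

theorem mul {l m n R : Type*} [Fintype m] [NonUnitalNonAssocSemiring R]
    {A : Matrix l m R} {B : Matrix m n R} {f : m → l} {g : n → m}
    (hA : SupportedOnGraph A f) (hB : SupportedOnGraph B g) :
    SupportedOnGraph (A * B) (f ∘ g) := by
  intro i j hij
  obtain ⟨p, -, hp⟩ := Finset.exists_ne_zero_of_sum_ne_zero hij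
  calc i = f p := hA (left_ne_zero_of_mul hp)
    _ = f (g j) := congrArg f (hB (right_ne_zero_of_mul hp))

theorem pow {n R : Type*} [Fintype n] [DecidableEq n] [Semiring R] {A : Matrix n n R} {f : n → n}
    (hA : SupportedOnGraph A f) (k : ℕ) : SupportedOnGraph (A ^ k) f^[k] := by
  induction k with
  | zero => simpa only [pow_zero, Function.iterate_zero] using one
  | succ k ih => simpa only [pow_succ, Function.iterate_succ] using ih.mul hA

end SupportedOnGraph

/-- A square matrix is submonomial if its nonzero entries lie on the graph of a permutation. For a
finite index type this means that every row and every column has at most one nonzero entry. -/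
def IsSubmonomial {n R : Type*} [Zero R] (A : Matrix n n R) : Prop :=
  ∃ σ : Equiv.Perm n, SupportedOnGraph A σ

namespace IsSubmonomial

theorem of_isMonomial {n : Type*} [Fintype n] {A : Matrix n n ℂ} (hA : A.IsMonomial) :
    IsSubmonomial A := by
  obtain ⟨existsUnique_col, existsUnique_row⟩ := hA
  choose f hf f_unique using existsUnique_row
  have f_injective : f.Injective := fun j j' h =>
    (existsUnique_col (f j)).unique (hf j) (h ▸ hf j')
  exact ⟨.ofBijective f (Finite.injective_iff_bijective.mp f_injective), fun i j => f_unique j i⟩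

theorem isDiag_pow_lcm {n R : Type*} [Fintype n] [DecidableEq n] [Semiring R] {A : Matrix n n R}
    (hA : IsSubmonomial A) : (A ^ (Finset.Icc 1 (Fintype.card n)).lcm id).IsDiag := by
  obtain ⟨σ, hσ⟩ := hA
  have iterate_eq_id : σ^[(Finset.Icc 1 (Fintype.card n)).lcm id] = id := by
    rw [Equiv.Perm.iterate_eq_pow,
      orderOf_dvd_iff_pow_eq_one.mp (orderOf_perm_dvd_lcm_Icc_card σ), Equiv.Perm.coe_one]
  exact (iterate_eq_id ▸ hσ.pow _ : SupportedOnGraph _ id).isDiag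

end IsSubmonomial

theorem protected_gate_power_diagonal_general {ι κ R : Type*} [Fintype ι] [DecidableEq ι]
    [Semiring R] (V : κ → (Matrix ι ι R)ˣ) {U : Matrix ι ι R} (hU : IsSubmonomial U)
    (hconj : ∀ k, IsSubmonomial (V k * U * (V k)⁻¹ : Matrix ι ι R)) :
    (U ^ (Finset.Icc 1 (Fintype.card ι)).lcm id).IsDiag ∧
      ∀ k, (V k * U ^ (Finset.Icc 1 (Fintype.card ι)).lcm id * (V k)⁻¹ : Matrix ι ι R).IsDiag :=
  ⟨hU.isDiag_pow_lcm, fun k => Units.conj_pow (V k) U _ ▸ (hconj k).isDiag_pow_lcm⟩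

/-- **Every protected gate has trivial action up to a bounded power.**
Given unitaries `V₁, …, V_M`, let `Δ` consist of the monomial unitaries remaining
monomial under conjugation by every `V_k`, and let `L = lcm(1, …, n)`.  Then for every
`U ∈ Δ`, the power `U^L` is a diagonal unitary and `V_k U^L V_k⁻¹` is diagonal for
every `k`; i.e. `U^L` belongs to the subgroup `T` of diagonal intertwiners. -/
theorem protected_gate_power_diagonal
    (n M : ℕ) (V : Fin M → Matrix (Fin n) (Fin n) ℂ)
    (hV : ∀ k, V k ∈ Matrix.unitaryGroup (Fin n) ℂ)
    (L : ℕ) (hL : L = (Finset.Icc 1 n).lcm id)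
    (U : Matrix (Fin n) (Fin n) ℂ) (hU : U ∈ Matrix.unitaryGroup (Fin n) ℂ)
    (hUmono : U.IsMonomial)
    (hconj : ∀ k, (V k * U * (V k)⁻¹).IsMonomial) :
    U ^ L ∈ Matrix.unitaryGroup (Fin n) ℂ ∧ (U ^ L).IsDiag ∧
      ∀ k, (V k * U ^ L * (V k)⁻¹).IsDiag := by
  lift V to Fin M → (Matrix (Fin n) (Fin n) ℂ)ˣ using
    fun k => Unitary.isUnit_coe (U := ⟨V k, hV k⟩)
  simp only [← Matrix.coe_units_inv] at hconj ⊢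
  refine ⟨pow_mem hU L, ?_⟩
  simpa only [hL, Fintype.card_fin] using protected_gate_power_diagonal_general V
    (.of_isMonomial hUmono) fun k => .of_isMonomial (hconj k)
end

section
/- Let W be a finite-dimensional complex vector space, A a finite index set, and {F_a}_{a∈A}, {G_b}_{b∈A} two families of linear operators on W such that the family of products {F_c ∘ G_d}_{(c,d) ∈ A×A} is linearly independent and such that G_b ∘ F_a = μ_{a,b} · F_a ∘ G_b for all a, b ∈ A, where μ_{a,b} ∈ ℂ. Suppose U is an invertible linear operator on W and Λ, Λ' are A×A complex matrices with U F_a U⁻¹ = Σ_{c∈A} Λ_{a,c} F_c and U G_b U⁻¹ = Σ_{d∈A} Λ'_{b,d} G_d for all a, b. Then Λ_{a,c} · Λ'_{b,d} · (μ_{c,d} − μ_{a,b}) = 0 for all a, b, c, d ∈ A. -/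
open scoped BigOperators

/-!
Conjugation is multiplicative, so the image of `G b * F a = μ a b • (F a * G b)` is a relation
between linear combinations of the products `F c * G d`, once each `G d * F c` has been reordered
at the cost of the phase `μ c d`. Linear independence of these products lets one compare
coefficients: `Λ a c * Λ' b d * μ c d` on one side, `Λ a c * Λ' b d * μ a b` on the other.
-/

section PhaseCommutation

variable {R E ι κ : Type*} [CommSemiring R] [NonUnitalNonAssocSemiring E] [Module R E]
  [IsScalarTower R E E] [SMulCommClass R E E]

theorem sum_smul_mul_sum_smul (s : Finset ι) (t : Finset κ) (u : ι → R) (v : κ → R)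
    (F : ι → E) (G : κ → E) :
    (∑ i ∈ s, u i • F i) * (∑ j ∈ t, v j • G j) =
      ∑ p ∈ s ×ˢ t, (u p.1 * v p.2) • (F p.1 * G p.2) := by
  simp only [Finset.sum_mul_sum, Finset.sum_product, smul_mul_smul_comm]

theorem sum_smul_mul_sum_smul_of_mul_eq_smul_mul {F : ι → E} {G : κ → E} {μ : ι → κ → R}
    (hcomm : ∀ i j, G j * F i = μ i j • (F i * G j)) (s : Finset ι) (t : Finset κ)
    (u : ι → R) (v : κ → R) :
    (∑ j ∈ t, v j • G j) * (∑ i ∈ s, u i • F i) =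
      ∑ p ∈ s ×ˢ t, (u p.1 * v p.2 * μ p.1 p.2) • (F p.1 * G p.2) := by
  rw [sum_smul_mul_sum_smul, Finset.sum_product_right, Finset.sum_product]
  simp only [hcomm, smul_smul, mul_comm (v _)]

theorem coeff_mul_phase_eq_of_sum_mul_sum_eq_smul {F : ι → E} {G : κ → E} {μ : ι → κ → R}
    (hindep : LinearIndependent R fun p : ι × κ => F p.1 * G p.2)
    (hcomm : ∀ i j, G j * F i = μ i j • (F i * G j)) {s : Finset ι} {t : Finset κ}
    {u : ι → R} {v : κ → R} {ν : R}
    (h : (∑ j ∈ t, v j • G j) * (∑ i ∈ s, u i • F i) =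
      ν • ((∑ i ∈ s, u i • F i) * (∑ j ∈ t, v j • G j)))
    {i : ι} (hi : i ∈ s) {j : κ} (hj : j ∈ t) :
    u i * v j * μ i j = u i * v j * ν := by
  have hsum : ∑ p ∈ s ×ˢ t, (u p.1 * v p.2 * μ p.1 p.2) • (F p.1 * G p.2) =
      ∑ p ∈ s ×ˢ t, (u p.1 * v p.2 * ν) • (F p.1 * G p.2) := by
    rw [← sum_smul_mul_sum_smul_of_mul_eq_smul_mul hcomm, h, sum_smul_mul_sum_smul,
      Finset.smul_sum]
    simp only [smul_smul, mul_comm ν]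
  exact linearIndependent_iff'ₛ.mp hindep _ _ _ hsum (i, j) (Finset.mk_mem_product hi hj)

theorem string_operator_consistency_general {Φ : Type*} [FunLike Φ E E]
    [NonUnitalAlgHomClass Φ R E E] (φ : Φ) {F : ι → E} {G : κ → E}
    (hindep : LinearIndependent R fun p : ι × κ => F p.1 * G p.2) {μ : ι → κ → R}
    (hcomm : ∀ a b, G b * F a = μ a b • (F a * G b))
    {s : ι → Finset ι} {t : κ → Finset κ} {Λ : Matrix ι ι R} {Λ' : Matrix κ κ R}
    (hF : ∀ a, φ (F a) = ∑ c ∈ s a, Λ a c • F c)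
    (hG : ∀ b, φ (G b) = ∑ d ∈ t b, Λ' b d • G d)
    {a c : ι} (hc : c ∈ s a) {b d : κ} (hd : d ∈ t b) :
    Λ a c * Λ' b d * μ c d = Λ a c * Λ' b d * μ a b := by
  have himage : φ (G b) * φ (F a) = μ a b • (φ (F a) * φ (G b)) := by
    rw [← map_mul, hcomm, map_smul, map_mul]
  rw [hF, hG] at himage
  exact coeff_mul_phase_eq_of_sum_mul_sum_eq_smul hindep hcomm himage hc hd

end PhaseCommutation

/-- **Consistency constraint from commutation phases of string operators.**
Let `W` be a finite-dimensional complex vector space, `{F a}` and `{G b}` families of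
operators whose pairwise products `F c ∘ G d` are linearly independent and which satisfy
the commutation relations `G b ∘ F a = μ a b • (F a ∘ G b)`.  If an invertible operator
`U` conjugates each family into its own span with coefficient matrices `Λ` and `Λ'`,
then `Λ a c * Λ' b d * (μ c d − μ a b) = 0` for all `a, b, c, d`. -/
theorem string_operator_consistency
    {W : Type*} [AddCommGroup W] [Module ℂ W] [FiniteDimensional ℂ W]
    {A : Type*} [Fintype A]
    (F G : A → (W →ₗ[ℂ] W))
    (hindep : LinearIndependent ℂ (fun p : A × A => F p.1 ∘ₗ G p.2))
    (μ : A → A → ℂ)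
    (hcomm : ∀ a b, G b ∘ₗ F a = μ a b • (F a ∘ₗ G b))
    (U : W ≃ₗ[ℂ] W)
    (Λ Λ' : Matrix A A ℂ)
    (hF : ∀ a, (U : W →ₗ[ℂ] W) ∘ₗ F a ∘ₗ (U.symm : W →ₗ[ℂ] W) = ∑ c, Λ a c • F c)
    (hG : ∀ b, (U : W →ₗ[ℂ] W) ∘ₗ G b ∘ₗ (U.symm : W →ₗ[ℂ] W) = ∑ d, Λ' b d • G d) :
    ∀ a b c d, Λ a c * Λ' b d * (μ c d - μ a b) = 0 := by
  intro a b c d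
  rw [mul_sub, sub_eq_zero]
  exact string_operator_consistency_general (U.conjAlgEquiv ℂ) hindep hcomm hF hG
    (Finset.mem_univ c) (Finset.mem_univ d)
end
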